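/- arXiv:1112.5015 — 2 statements merged into one kernel-verified Lean document; each statement's English description precedes it below -/
import Mathlib

section
/- Let K be a field of characteristic 0 and let r ≥ 1 be an integer. For integers 0 ≤ i < j, the multiplication map ×(x_1 + ⋯ + x_d)^{j−i} : (K[x_1,…,x_d]/(x_1^r,…,x_d^r))_i → (K[x_1,…,x_d]/(x_1^r,…,x_d^r))_j, p ↦ (x_1 + ⋯ + x_d)^{j−i}·p, is injective if i + j ≤ (r−1)d and surjective if i + j ≥ (r−1)d. -/
open MvPolynomial

/-! The proof is by representation theory of `sl₂`. With `s = r - 1`, the operators `x` and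
`s ∂ - x ∂²` make `K[x]/(x^r)` a representation of `sl₂` in which `xᵐ` has weight `2m - s`. Taking
tensor products, multiplication by `ℓ = x₁ + ⋯ + x_d` and `F = ∑ₖ (s ∂ₖ - xₖ ∂ₖ²)` satisfy
`F ℓ - ℓ F = s d - 2m` in degree `m` of `K[x₁, …, x_d]/(x₁^r, …, x_d^r)`. Hence
`F ℓⁿ⁺¹ = ℓⁿ⁺¹ F + (n + 1)(s d - 2m - n) ℓⁿ` in degree `m`. Where this scalar is invertible,
injectivity of `ℓⁿ⁺¹` on degree `m` follows from that of `ℓⁿ` on degree `m` and of `ℓⁿ⁺²` on degree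
`m - 1`, and dually for surjectivity, which holds trivially onto degrees above `s d`. -/

theorem isUnit_intCast_of_natAbs_le {R : Type*} [CommRing R] {N : ℕ}
    (hN : IsUnit (N.factorial : R)) {z : ℤ} (hz : z ≠ 0) (hzN : z.natAbs ≤ N) :
    IsUnit (z : R) := by
  have hdvd : z ∣ (N.factorial : ℤ) :=
    Int.natAbs_dvd.1 (Int.natCast_dvd_natCast.2
      (Nat.dvd_factorial (Int.natAbs_pos.2 hz) hzN))
  refine isUnit_of_dvd_unit ?_ hN
  simpa only [Int.cast_natCast] using Int.cast_dvd_cast (α := R) _ _ hdvd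

theorem isUnit_commutator_coeff {R : Type*} [CommRing R] {N : ℕ}
    (hN : IsUnit (N.factorial : R)) {m n : ℕ} (hn : n < N) (hne : 2 * m + n ≠ N)
    (hle : 2 * m + n ≤ 2 * N) :
    IsUnit (((n : R) + 1) * ((N : R) - 2 * m - n)) := by
  have hleft : IsUnit ((n + 1 : ℤ) : R) :=
    isUnit_intCast_of_natAbs_le hN (by omega) (by omega)
  have hright : IsUnit ((N - 2 * m - n : ℤ) : R) :=
    isUnit_intCast_of_natAbs_le hN (by omega) (by omega)
  exact_mod_cast hleft.mul hright

theorem end_pow_succ_apply {R M : Type*} [Semiring R] [AddCommMonoid M] [Module R M]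
    (L : Module.End R M) (n : ℕ) (v : M) : (L ^ (n + 1)) v = L ((L ^ n) v) := by
  rw [pow_succ', Module.End.mul_apply]

/-- A family of submodules `G 0, G 1, …` on which `L` raises and `F` lowers the index by one, with
the commutator `F L - L F` acting on `G m` as the scalar `N - 2m`: the weight spaces of
a representation of `sl₂` with weights bounded below by `-N`, without reference to the Lie algebra
and for a family that may overlap or fail to span. -/
structure IsSl2Grading {R M : Type*} [CommRing R] [AddCommGroup M] [Module R M]
    (G : ℕ → Submodule R M) (N : ℕ) (L F : Module.End R M) : Prop where
  raise_mem : ∀ {m v}, v ∈ G m → L v ∈ G (m + 1)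
  lower_eq_zero : ∀ {v}, v ∈ G 0 → F v = 0
  lower_mem : ∀ {m v}, v ∈ G (m + 1) → F v ∈ G m
  lower_raise : ∀ {m v}, v ∈ G m → F (L v) = L (F v) + ((N : R) - 2 * m) • v

namespace IsSl2Grading

variable {R M : Type*} [CommRing R] [AddCommGroup M] [Module R M]
  {G : ℕ → Submodule R M} {N : ℕ} {L F : Module.End R M}

theorem map {M' : Type*} [AddCommGroup M'] [Module R M'] (h : IsSl2Grading G N L F)
    (f : M →ₗ[R] M') {L' F' : Module.End R M'} (hL : ∀ v, f (L v) = L' (f v))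
    (hF : ∀ v, f (F v) = F' (f v)) : IsSl2Grading (fun m => (G m).map f) N L' F' where
  raise_mem := by
    rintro m _ ⟨v, hv, rfl⟩
    exact ⟨L v, h.raise_mem hv, hL v⟩
  lower_eq_zero := by
    rintro _ ⟨v, hv, rfl⟩
    rw [← hF, h.lower_eq_zero hv, map_zero]
  lower_mem := by
    rintro m _ ⟨v, hv, rfl⟩
    exact ⟨F v, h.lower_mem hv, hF v⟩
  lower_raise := by
    rintro m _ ⟨v, hv, rfl⟩
    rw [← hL, ← hF, h.lower_raise hv, map_add, map_smul, hL, hF]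

theorem raise_pow_mem (h : IsSl2Grading G N L F) {m : ℕ} {v : M} (hv : v ∈ G m) (n : ℕ) :
    (L ^ n) v ∈ G (m + n) := by
  induction n with
  | zero => exact hv
  | succ n ih =>
    rw [end_pow_succ_apply]
    exact h.raise_mem ih

theorem raise_lower_mem (h : IsSl2Grading G N L F) {m : ℕ} {v : M} (hv : v ∈ G m) :
    L (F v) ∈ G m := by
  cases m with
  | zero => simp only [h.lower_eq_zero hv, map_zero, zero_mem]
  | succ m => exact h.raise_mem (h.lower_mem hv)

theorem lower_raise_pow_succ (h : IsSl2Grading G N L F) {m : ℕ} {v : M} (hv : v ∈ G m) (n : ℕ) :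
    F ((L ^ (n + 1)) v) =
      (L ^ (n + 1)) (F v) + (((n : R) + 1) * ((N : R) - 2 * m - n)) • (L ^ n) v := by
  induction n with
  | zero => simpa using h.lower_raise hv
  | succ n ih =>
    rw [end_pow_succ_apply L (n + 1), h.lower_raise (h.raise_pow_mem hv _), ih, map_add, map_smul,
      ← end_pow_succ_apply, ← end_pow_succ_apply, add_assoc, ← add_smul]
    congr 2
    push_cast
    ring

theorem eq_zero_of_raise_pow_eq_zero (h : IsSl2Grading G N L F) (hN : IsUnit (N.factorial : R)) :
    ∀ {m n : ℕ}, 2 * m + n ≤ N → ∀ {v}, v ∈ G m → (L ^ n) v = 0 → v = 0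
  | _, 0, _, _, _, hLv => hLv
  | m, n + 1, hmn, v, hv, hLv => by
    have hcomm := h.lower_raise_pow_succ hv n
    rw [hLv, map_zero] at hcomm
    have hFv : F v = 0 := by
      cases m with
      | zero => exact h.lower_eq_zero hv
      | succ m =>
        refine h.eq_zero_of_raise_pow_eq_zero hN (n := n + 2) (by omega) (h.lower_mem hv) ?_
        have := congrArg L hcomm
        rwa [map_zero, map_add, map_smul, ← end_pow_succ_apply, ← end_pow_succ_apply, hLv,
          smul_zero, add_zero, eq_comm] at this
    refine h.eq_zero_of_raise_pow_eq_zero hN (n := n) (by omega) hv ?_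
    rw [hFv, map_zero, zero_add, eq_comm] at hcomm
    exact (isUnit_commutator_coeff hN (by omega) (by omega) (by omega)).smul_eq_zero.1 hcomm
  termination_by m n => (m, n)

theorem injOn_raise_pow (h : IsSl2Grading G N L F) (hN : IsUnit (N.factorial : R)) {m n : ℕ}
    (hmn : 2 * m + n ≤ N) : Set.InjOn (L ^ n) (G m) :=
  LinearMap.injOn_of_disjoint_ker le_rfl
    (LinearMap.disjoint_ker.2 fun _ hv hLv => h.eq_zero_of_raise_pow_eq_zero hN hmn hv hLv)

theorem le_map_raise_pow_succ (h : IsSl2Grading G N L F) {i n : ℕ}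
    (hunit : IsUnit (((n : R) + 1) * ((N : R) - 2 * (i + 1 : ℕ) - n)))
    (hdeg : G (i + 1 + n) ≤ (G (i + 1)).map (L ^ n))
    (hdeg_succ : G (i + (n + 2)) ≤ (G i).map (L ^ (n + 2))) :
    G (i + (n + 1)) ≤ (G i).map (L ^ (n + 1)) := by
  intro z hz
  obtain ⟨w, hw, rfl⟩ := hdeg (by rwa [add_right_comm, add_assoc])
  obtain ⟨u, hu, hwu⟩ := hdeg_succ (by
    simpa only [add_assoc, add_comm 1, add_left_comm 1] using h.raise_pow_mem hw (n + 1))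
  have hcomm : (L ^ (n + 1)) (F w) + (((n : R) + 1) * ((N : R) - 2 * (i + 1 : ℕ) - n)) • (L ^ n) w =
      (L ^ (n + 1)) (L (F u)) +
        ((((n + 1 : ℕ) : R) + 1) * ((N : R) - 2 * i - (n + 1 : ℕ))) • (L ^ (n + 1)) u := by
    rw [← h.lower_raise_pow_succ hw, ← hwu, h.lower_raise_pow_succ hu, pow_succ L (n + 1),
      Module.End.mul_apply]
  rw [← Submodule.smul_mem_iff_of_isUnit _ hunit, eq_sub_of_add_eq' hcomm, ← map_smul, ← map_add,
    ← map_sub]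
  exact Submodule.mem_map_of_mem <|
    sub_mem (add_mem (h.raise_lower_mem hu) ((G i).smul_mem _ hu)) (h.lower_mem hw)

theorem le_map_raise_pow (h : IsSl2Grading G N L F) (hN : IsUnit (N.factorial : R))
    (htop : ∀ m, N < m → G m = ⊥) :
    ∀ {i n : ℕ}, N ≤ 2 * i + n → G (i + n) ≤ (G i).map (L ^ n)
  | i, 0, _ => by simp [Module.End.one_eq_id]
  | i, n + 1, hin => by
    by_cases hdeg : N < i + (n + 1)
    · exact (htop _ hdeg).trans_le bot_le
    · exact h.le_map_raise_pow_succ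
        (isUnit_commutator_coeff hN (by omega) (by omega) (by omega))
        (h.le_map_raise_pow hN htop (by omega)) (h.le_map_raise_pow hN htop (by omega))
  termination_by i n => 2 * N - (2 * i + n)

end IsSl2Grading

section Polynomial

variable {σ R : Type*} [CommRing R]

theorem pderiv_eq_zero_of_isHomogeneous_zero {p : MvPolynomial σ R} (hp : p.IsHomogeneous 0)
    (k : σ) : pderiv k p = 0 := by
  rw [totalDegree_eq_zero_iff_eq_C.1 (Nat.le_zero.1 hp.totalDegree_le), pderiv_C]

theorem isHomogeneous_X_mul_pderiv {p : MvPolynomial σ R} {m : ℕ} (hp : p.IsHomogeneous m)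
    (k : σ) : (X k * pderiv k p).IsHomogeneous m := by
  cases m with
  | zero =>
    rw [pderiv_eq_zero_of_isHomogeneous_zero hp, mul_zero]
    exact isHomogeneous_zero _ _ _
  | succ m =>
    rw [add_comm]
    exact (isHomogeneous_X R k).mul hp.pderiv

theorem X_mul_pderiv_X_pow (k l : σ) (n : ℕ) :
    X k * pderiv k (X l ^ n : MvPolynomial σ R) = Finsupp.single l n k • X l ^ n := by
  rw [X_pow_eq_monomial, X_mul_pderiv_monomial]

variable (σ R) in
/-- The ideal generated by the `r`-th powers of the variables. -/
noncomputable def powerIdeal (r : ℕ) : Ideal (MvPolynomial σ R) :=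
  Ideal.span (Set.range fun k => X k ^ r)

theorem mem_powerIdeal_iff {r : ℕ} {p : MvPolynomial σ R} :
    p ∈ powerIdeal σ R r ↔ ∀ e ∈ p.support, ∃ k, r ≤ e k := by
  have hrange : (Set.range fun k => (X k : MvPolynomial σ R) ^ r) =
      (fun e => monomial e 1) '' Set.range fun k : σ => Finsupp.single k r := by
    simp only [← Set.range_comp, Function.comp_def, X_pow_eq_monomial]
  simp only [powerIdeal, hrange, mem_ideal_span_monomial_image, Set.exists_range_iff,
    Finsupp.single_le_iff]

variable [Fintype σ]

theorem mem_powerIdeal_of_isHomogeneous {s m : ℕ} (hm : s * Fintype.card σ < m)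
    {p : MvPolynomial σ R} (hp : p.IsHomogeneous m) : p ∈ powerIdeal σ R (s + 1) := by
  refine mem_powerIdeal_iff.2 fun e he => ?_
  have hdeg : ∑ k, e k = m := by
    rw [← Finsupp.degree_eq_sum, Finsupp.degree_eq_weight_one]
    exact hp (mem_support_iff.1 he)
  by_contra! hlt
  have hle : ∑ k, e k ≤ Fintype.card σ • s :=
    Finset.sum_le_card_nsmul _ _ _ fun k _ => Nat.lt_succ_iff.1 (hlt k)
  rw [hdeg, smul_eq_mul, mul_comm] at hle
  exact hm.not_ge hle

/-- The operator `∑ₖ (s ∂ₖ - xₖ ∂ₖ²)`, the `sl₂`-partner of multiplication by the sum of the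
variables. The value of `s` that makes it preserve the ideal `(xₖ ^ r)` is `r - 1`. -/
noncomputable def lowering (s : R) : Module.End R (MvPolynomial σ R) :=
  ∑ k, (s • (pderiv k).toLinearMap -
    LinearMap.mulLeft R (X k) ∘ₗ (pderiv k).toLinearMap ∘ₗ (pderiv k).toLinearMap)

theorem lowering_apply (s : R) (p : MvPolynomial σ R) :
    lowering s p = ∑ k, (C s * pderiv k p - X k * pderiv k (pderiv k p)) := by
  simp [lowering, C_mul']

theorem lowering_mul (s : R) (p q : MvPolynomial σ R) :
    lowering s (p * q) =
      p * lowering s q + q * lowering s p - 2 * ∑ k, X k * (pderiv k p * pderiv k q) := by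
  simp only [lowering_apply, Finset.mul_sum, ← Finset.sum_add_distrib, ← Finset.sum_sub_distrib]
  refine Finset.sum_congr rfl fun k _ => ?_
  simp only [pderiv_mul, map_add]
  ring

theorem lowering_eq_zero_of_isHomogeneous_zero (s : R) {p : MvPolynomial σ R}
    (hp : p.IsHomogeneous 0) : lowering s p = 0 := by
  simp [lowering_apply, pderiv_eq_zero_of_isHomogeneous_zero hp]

theorem isHomogeneous_lowering (s : R) {m : ℕ} {p : MvPolynomial σ R}
    (hp : p.IsHomogeneous (m + 1)) : (lowering s p).IsHomogeneous m := by
  rw [lowering_apply]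
  refine IsHomogeneous.sum _ _ _ fun k _ => ?_
  have hpderiv : (pderiv k p).IsHomogeneous m := hp.pderiv
  exact (hpderiv.C_mul s).sub (isHomogeneous_X_mul_pderiv hpderiv k)

theorem pderiv_sum_X (k : σ) : pderiv k (∑ l, X l : MvPolynomial σ R) = 1 := by
  classical
  simp [map_sum, pderiv_X, Pi.single_apply]

theorem lowering_sum_X (s : R) :
    lowering s (∑ l, X l : MvPolynomial σ R) = C (s * Fintype.card σ) := by
  simp only [lowering_apply, pderiv_sum_X, Derivation.map_one_eq_zero, mul_zero, sub_zero,
    Finset.sum_const, Finset.card_univ, nsmul_eq_mul, map_mul, map_natCast]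
  ring

theorem lowering_sum_X_mul (s : R) {m : ℕ} {p : MvPolynomial σ R} (hp : p.IsHomogeneous m) :
    lowering s ((∑ l, X l) * p) =
      (∑ l, X l) * lowering s p + (s * Fintype.card σ - 2 * m) • p := by
  have heuler : ∑ k, X k * pderiv k p = C (m : R) * p := by
    rw [hp.sum_X_mul_pderiv, nsmul_eq_mul, map_natCast]
  simp only [lowering_mul, lowering_sum_X, pderiv_sum_X, one_mul, heuler, smul_eq_C_mul, map_sub,
    map_mul, map_ofNat]
  ring

theorem lowering_X_pow_succ (s : ℕ) (l : σ) :
    lowering (s : R) (X l ^ (s + 1) : MvPolynomial σ R) = 0 := by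
  rw [lowering_apply]
  refine Finset.sum_eq_zero fun k _ => ?_
  obtain rfl | hkl := eq_or_ne l k
  · have hderiv : pderiv l (X l ^ (s + 1) : MvPolynomial σ R) = C (s + 1 : R) * X l ^ s := by
      simp
    have heuler := X_mul_pderiv_X_pow (R := R) l l s
    rw [Finsupp.single_eq_same, nsmul_eq_mul] at heuler
    rw [hderiv, pderiv_C_mul, mul_left_comm (X l), heuler, map_natCast]
    ring
  · simp [pderiv_X_of_ne hkl]

theorem lowering_mem_powerIdeal (s : ℕ) {p : MvPolynomial σ R} (hp : p ∈ powerIdeal σ R (s + 1)) :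
    lowering (s : R) p ∈ powerIdeal σ R (s + 1) := by
  obtain ⟨c, rfl⟩ := Ideal.mem_span_range_iff_exists_fun.1 hp
  rw [map_sum]
  refine Ideal.sum_mem _ fun l _ => ?_
  have hXl : X l ^ (s + 1) ∈ powerIdeal σ R (s + 1) := Ideal.subset_span ⟨l, rfl⟩
  rw [lowering_mul, lowering_X_pow_succ, mul_zero, zero_add]
  refine sub_mem (Ideal.mul_mem_right _ _ hXl) (Ideal.mul_mem_left _ _ (sum_mem fun k _ => ?_))
  rw [mul_left_comm, X_mul_pderiv_X_pow]
  exact Ideal.mul_mem_left _ _ (nsmul_mem hXl _)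

theorem isSl2Grading_homogeneousSubmodule (s : ℕ) :
    IsSl2Grading (homogeneousSubmodule σ R) (s * Fintype.card σ)
      (LinearMap.mulLeft R (∑ k, X k)) (lowering (s : R)) where
  raise_mem {m v} hv := by
    rw [add_comm]
    exact (IsHomogeneous.sum _ _ _ fun k _ => isHomogeneous_X R k).mul hv
  lower_eq_zero := lowering_eq_zero_of_isHomogeneous_zero _
  lower_mem := isHomogeneous_lowering _
  lower_raise hv := by simpa using lowering_sum_X_mul (s : R) hv

end Polynomial

section Quotient

variable {σ R : Type*} [CommRing R]

/-- The degree-`m` component of `R[x] ⧸ I`, as the image of the homogeneous polynomials of degree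
`m`. -/
noncomputable def quotientComponent (I : Ideal (MvPolynomial σ R)) (m : ℕ) :
    Submodule R (MvPolynomial σ R ⧸ I) :=
  (homogeneousSubmodule σ R m).map (Ideal.Quotient.mkₐ R I).toLinearMap

variable [Fintype σ]

variable (σ R) in
/-- The operator induced by `lowering s` on `R[x] ⧸ (xₖ ^ (s + 1))`. -/
noncomputable def quotientLowering (s : ℕ) :
    Module.End R (MvPolynomial σ R ⧸ powerIdeal σ R (s + 1)) :=
  (Submodule.Quotient.restrictScalarsEquiv R (powerIdeal σ R (s + 1))).conj <|
    Submodule.mapQ _ _ (lowering (s : R)) fun _ => lowering_mem_powerIdeal s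

theorem isSl2Grading_quotientComponent (s : ℕ) :
    IsSl2Grading (quotientComponent (powerIdeal σ R (s + 1))) (s * Fintype.card σ)
      (LinearMap.mulLeft R (Ideal.Quotient.mk _ (∑ k, X k))) (quotientLowering σ R s) :=
  (isSl2Grading_homogeneousSubmodule s).map _ (map_mul (Ideal.Quotient.mk _) _) fun _ => rfl

theorem quotientComponent_powerIdeal_eq_bot {s m : ℕ} (hm : s * Fintype.card σ < m) :
    quotientComponent (powerIdeal σ R (s + 1)) m = ⊥ := by
  rw [quotientComponent, ← LinearMap.le_ker_iff_map]
  exact fun p hp => Ideal.Quotient.eq_zero_iff_mem.2 (mem_powerIdeal_of_isHomogeneous hm hp)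

end Quotient

theorem monomial_complete_intersection_lefschetz_general {σ R : Type*} [Fintype σ] [CommRing R]
    {r : ℕ} (hr : 1 ≤ r) (hunit : IsUnit (((r - 1) * Fintype.card σ).factorial : R))
    {i j : ℕ} (hij : i ≤ j) :
    letI I := powerIdeal σ R r
    letI c := Ideal.Quotient.mk I ((∑ k, X k) ^ (j - i))
    (i + j ≤ (r - 1) * Fintype.card σ → Set.InjOn (c * ·) (quotientComponent I i)) ∧
    ((r - 1) * Fintype.card σ ≤ i + j →
      Set.SurjOn (c * ·) (quotientComponent I i) (quotientComponent I j)) := by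
  obtain ⟨s, rfl⟩ := Nat.exists_eq_add_of_le' hr
  obtain ⟨n, rfl⟩ := Nat.exists_eq_add_of_le hij
  rw [Nat.add_sub_cancel] at hunit ⊢
  rw [Nat.add_sub_cancel_left]
  have hgrading := isSl2Grading_quotientComponent (σ := σ) (R := R) s
  have hpow : ⇑(LinearMap.mulLeft R (Ideal.Quotient.mk (powerIdeal σ R (s + 1)) (∑ k, X k)) ^ n) =
      (Ideal.Quotient.mk (powerIdeal σ R (s + 1)) ((∑ k, X k) ^ n) * ·) := by
    rw [LinearMap.pow_mulLeft, map_pow]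
    rfl
  rw [← hpow]
  exact ⟨fun h => hgrading.injOn_raise_pow hunit (by omega),
    fun h => hgrading.le_map_raise_pow hunit
      (fun _ => quotientComponent_powerIdeal_eq_bot) (by omega)⟩

/-- **Lemma 2.1 (Stanley, Watanabe).**
Let `K` be a field of characteristic `0`, `r ≥ 1`, and `0 ≤ i < j` integers.  In the
monomial complete intersection `Q = K[x₁,…,x_d]/(x₁^r,…,x_d^r)`, multiplication by
`(x₁ + ⋯ + x_d)^{j-i}` maps the degree-`i` component of `Q` to the degree-`j` component,
injectively if `i + j ≤ (r-1)d` and surjectively if `i + j ≥ (r-1)d`.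
Here the degree-`k` component of `Q` is the image of the space of homogeneous polynomials of
degree `k` under the quotient map. -/
theorem monomial_complete_intersection_lefschetz
    (K : Type*) [Field K] [CharZero K]
    (d r : ℕ) (hr : 1 ≤ r) (i j : ℕ) (hij : i < j) :
    letI I : Ideal (MvPolynomial (Fin d) K) := Ideal.span (Set.range fun k => (X k : MvPolynomial (Fin d) K) ^ r)
    letI Qcomp : ℕ → Submodule K (MvPolynomial (Fin d) K ⧸ I) := fun k =>
      Submodule.map (Ideal.Quotient.mkₐ K I).toLinearMap
        (homogeneousSubmodule (Fin d) K k)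
    letI c : MvPolynomial (Fin d) K ⧸ I :=
      Ideal.Quotient.mk I ((∑ k, X k) ^ (j - i))
    (i + j ≤ (r - 1) * d →
      ∀ x ∈ Qcomp i, ∀ y ∈ Qcomp i, c * x = c * y → x = y) ∧
    ((r - 1) * d ≤ i + j →
      ∀ z ∈ Qcomp j, ∃ x ∈ Qcomp i, c * x = z) := by
  have h := monomial_complete_intersection_lefschetz_general (σ := Fin d) (R := K) hr
    (Nat.cast_ne_zero.2 (Nat.factorial_ne_zero _)).isUnit hij.le
  rw [Fintype.card_fin] at h
  exact h
end

section
/- Let A be a standard graded K-algebra of Krull dimension d whose h-polynomial h_A(t) has nonnegative coefficients. Then for every integer r ≥ 1, the degree of the h-polynomial of the r-th Veronese subalgebra satisfies deg h_{A^⟨r⟩}(t) = ⌊(d(r−1) + deg h_A(t))/r⌋. -/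
/-!
Passing to the `r`-th Veronese subalgebra keeps every `r`-th coefficient of the Hilbert series
`h / (1 - t) ^ d`. Since `1 - t ^ r = (1 + t + ⋯ + t ^ (r - 1)) (1 - t)`, this series equals
`h (1 + t + ⋯ + t ^ (r - 1)) ^ d / (1 - t ^ r) ^ d`, and multiplication by series in `t ^ r`
commutes with keeping every `r`-th coefficient. So the new `h`-polynomial consists of every `r`-th
coefficient of `p = h (1 + t + ⋯ + t ^ (r - 1)) ^ d`, whose degree is `d (r - 1) + deg h`. If
`d ≥ 1`, nonnegativity of `h` makes the top `r` coefficients of `p` positive, so the largest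
multiple of `r` not exceeding `deg p` carries a nonzero coefficient. If `d = 0`, then `p = h` is
the Hilbert series of an algebra generated in degree one, which has no internal zeros.
-/

section VeroneseSeries

open PowerSeries

variable {R : Type*}

/-- The power series `∑ aₙᵣ tⁿ` obtained from `∑ aₙ tⁿ`; it turns the Hilbert series of a graded
algebra into that of its `r`-th Veronese subalgebra, and is the power series analogue of
`Polynomial.contract`. -/
noncomputable def veroneseSeries [Semiring R] (r : ℕ) (F : R⟦X⟧) : R⟦X⟧ :=
  PowerSeries.mk fun n => F.coeff (n * r)

lemma coeff_veroneseSeries [Semiring R] (r n : ℕ) (F : R⟦X⟧) :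
    (veroneseSeries r F).coeff n = F.coeff (n * r) :=
  coeff_mk _ _

lemma veroneseSeries_coe [CommSemiring R] {r : ℕ} (hr : r ≠ 0) (p : Polynomial R) :
    veroneseSeries r (p : R⟦X⟧) = (p.contract r : Polynomial R) := by
  ext n
  simp only [coeff_veroneseSeries, Polynomial.coeff_coe, Polynomial.coeff_contract hr]

lemma veroneseSeries_mul_expand [CommRing R] {r : ℕ} (hr : r ≠ 0) (F G : R⟦X⟧) :
    veroneseSeries r (F * G.expand r hr) = veroneseSeries r F * G := by
  ext n
  simp only [coeff_veroneseSeries, coeff_mul]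
  symm
  refine Finset.sum_of_injOn (fun x => (x.1 * r, x.2 * r)) ?_ ?_ ?_ ?_
  · intro x _ y _ hxy
    simpa [Prod.ext_iff, hr] using hxy
  · rintro ⟨a, b⟩ hab
    simp_all [← add_mul]
  · rintro ⟨i, j⟩ hij not_image
    have not_dvd : ¬ r ∣ j := by
      intro hj
      have add_eq : i + j = n * r := by simpa using hij
      have hi : r ∣ i := (Nat.dvd_add_left hj).1 (add_eq ▸ dvd_mul_left r n)
      obtain ⟨a, rfl⟩ := hi
      obtain ⟨b, rfl⟩ := hj
      rw [← mul_add, mul_comm] at add_eq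
      have hab : a + b = n := Nat.eq_of_mul_eq_mul_right hr.pos add_eq
      exact not_image ⟨(a, b), by simpa using hab, by simp only [mul_comm]⟩
    rw [coeff_expand_of_not_dvd r hr G not_dvd, mul_zero]
  · rintro ⟨i, j⟩ _
    simp only [mul_comm j r, coeff_expand_mul]

/-- The `h`-polynomial of the `r`-th Veronese subalgebra in terms of the `h`-polynomial `h` of a
`d`-dimensional algebra: every `r`-th coefficient of `h (1 + t + ⋯ + t ^ (r - 1)) ^ d`. -/
noncomputable def veroneseTransform [CommSemiring R] (d r : ℕ) (h : Polynomial R) : Polynomial R :=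
  (h * (∑ i ∈ Finset.range r, Polynomial.X ^ i) ^ d).contract r

lemma coe_veroneseTransform [CommRing R] {d r : ℕ} (hr : r ≠ 0) {h : Polynomial R} {F : R⟦X⟧}
    (hF : (h : R⟦X⟧) = F * (1 - X) ^ d) :
    (veroneseTransform d r h : R⟦X⟧) = veroneseSeries r F * (1 - X) ^ d := by
  have expand_eq : (1 - X) * ((∑ i ∈ Finset.range r, Polynomial.X ^ i : Polynomial R) : R⟦X⟧)
      = (1 - X : R⟦X⟧).expand r hr := by
    have geom_sum := congrArg ((↑) : Polynomial R → R⟦X⟧) (mul_neg_geom_sum Polynomial.X r)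
    simpa using geom_sum
  rw [veroneseTransform, ← veroneseSeries_coe hr, Polynomial.coe_mul, Polynomial.coe_pow, hF,
    mul_assoc, ← mul_pow, expand_eq, ← map_pow, veroneseSeries_mul_expand hr]

end VeroneseSeries

section Degree

open Polynomial

variable {R : Type*}

lemma natDegree_contract_of_coeff_ne_zero [CommSemiring R] {r : ℕ} (hr : r ≠ 0) {p : R[X]}
    (hp : p.coeff (p.natDegree / r * r) ≠ 0) :
    (p.contract r).natDegree = p.natDegree / r := by
  refine natDegree_eq_of_le_of_coeff_ne_zero ?_ (by rwa [coeff_contract hr])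
  refine natDegree_le_iff_coeff_eq_zero.2 fun n hn => ?_
  rw [coeff_contract hr]
  exact coeff_eq_zero_of_natDegree_lt ((Nat.div_lt_iff_lt_mul hr.pos).1 hn)

lemma natDegree_geom_sum_X [Semiring R] [Nontrivial R] (r : ℕ) :
    (∑ i ∈ Finset.range r, X ^ i : R[X]).natDegree = r - 1 := by
  cases r with
  | zero => simp
  | succ r =>
    refine natDegree_eq_of_le_of_coeff_ne_zero ?_ (by simp [coeff_X_pow])
    refine natDegree_sum_le_of_forall_le _ _ fun i hi => ?_
    rw [natDegree_X_pow]
    exact Nat.le_sub_one_of_lt (Finset.mem_range.1 hi)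

lemma natDegree_mul_geom_sum_pow [Semiring R] {r : ℕ} (hr : r ≠ 0) {h : R[X]} (h0 : h ≠ 0)
    (d : ℕ) :
    (h * (∑ i ∈ Finset.range r, X ^ i) ^ d).natDegree = d * (r - 1) + h.natDegree := by
  have := Nontrivial.of_polynomial_ne h0
  have monic : (∑ i ∈ Finset.range r, X ^ i : R[X]).Monic := monic_geom_sum_X hr
  rw [← (monic.pow d).natDegree_mul_comm, (monic.pow d).natDegree_mul' h0,
    monic.natDegree_pow, natDegree_geom_sum_X]

section NonnegCoeffs

variable [Semiring R] [PartialOrder R] [IsStrictOrderedRing R]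

variable (R) in
/-- The subsemiring of polynomials all of whose coefficients are nonnegative; it is used to rule out
cancellation in the coefficients of products. -/
def nonnegCoeffs : Subsemiring R[X] where
  carrier := {p | ∀ i, 0 ≤ p.coeff i}
  zero_mem' _ := by simp
  one_mem' i := by
    rw [coeff_one]
    split_ifs <;> simp
  add_mem' hp hq i := by
    rw [coeff_add]
    exact add_nonneg (hp i) (hq i)
  mul_mem' hp hq i := by
    rw [coeff_mul]
    exact Finset.sum_nonneg fun x _ => mul_nonneg (hp _) (hq _)

lemma X_mem_nonnegCoeffs : (X : R[X]) ∈ nonnegCoeffs R := fun i => by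
  rw [coeff_X]
  split_ifs <;> simp

lemma geom_sum_X_mem_nonnegCoeffs (r : ℕ) :
    ∑ i ∈ Finset.range r, X ^ i ∈ nonnegCoeffs R :=
  sum_mem fun i _ => pow_mem X_mem_nonnegCoeffs i

lemma leadingCoeff_pos_of_mem_nonnegCoeffs {p : R[X]} (hp : p ∈ nonnegCoeffs R) (h0 : p ≠ 0) :
    0 < p.leadingCoeff :=
  (hp _).lt_of_ne' (leadingCoeff_ne_zero.2 h0)

lemma coeff_mul_pos_of_mem_nonnegCoeffs {p q : R[X]} (hp : p ∈ nonnegCoeffs R)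
    (hq : q ∈ nonnegCoeffs R) {i j : ℕ} (hi : 0 < p.coeff i) (hj : 0 < q.coeff j) :
    0 < (p * q).coeff (i + j) := by
  rw [coeff_mul]
  exact Finset.sum_pos' (fun x _ => mul_nonneg (hp _) (hq _))
    ⟨(i, j), Finset.HasAntidiagonal.mem_antidiagonal.2 rfl, mul_pos hi hj⟩

lemma coeff_geom_sum_pow_pos {r d k : ℕ} (hr : r ≠ 0) (hk : k ≤ d * (r - 1)) :
    0 < ((∑ i ∈ Finset.range r, X ^ i : R[X]) ^ d).coeff k := by
  induction d generalizing k with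
  | zero =>
    obtain rfl : k = 0 := by lia
    simp
  | succ d ih =>
    have add_eq : min k (d * (r - 1)) + (k - d * (r - 1)) = k := by lia
    have remainder_lt : k - d * (r - 1) < r := by
      rw [Nat.succ_mul] at hk
      lia
    rw [pow_succ, ← add_eq]
    refine coeff_mul_pos_of_mem_nonnegCoeffs (pow_mem (geom_sum_X_mem_nonnegCoeffs r) d)
      (geom_sum_X_mem_nonnegCoeffs r) (ih (min_le_right _ _)) ?_
    simp [coeff_X_pow, remainder_lt]

lemma coeff_mul_geom_sum_pow_pos {r d k : ℕ} (hr : r ≠ 0) {h : R[X]} (hpos : h ∈ nonnegCoeffs R)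
    (h0 : h ≠ 0) (hk : h.natDegree ≤ k) (hk' : k ≤ d * (r - 1) + h.natDegree) :
    0 < (h * (∑ i ∈ Finset.range r, X ^ i) ^ d).coeff k := by
  rw [← Nat.add_sub_cancel' hk]
  exact coeff_mul_pos_of_mem_nonnegCoeffs hpos (pow_mem (geom_sum_X_mem_nonnegCoeffs r) d)
    (leadingCoeff_pos_of_mem_nonnegCoeffs hpos h0) (coeff_geom_sum_pow_pos hr (by lia))

end NonnegCoeffs

theorem natDegree_veroneseTransform [CommSemiring R] [PartialOrder R] [IsStrictOrderedRing R]
    {d r : ℕ} {h : R[X]} (hr : r ≠ 0) (hpos : h ∈ nonnegCoeffs R) (h0 : h ≠ 0)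
    (hd : d = 0 → ∀ i ≤ h.natDegree, h.coeff i ≠ 0) :
    (veroneseTransform d r h).natDegree = (d * (r - 1) + h.natDegree) / r := by
  have natDegree_eq := natDegree_mul_geom_sum_pow hr h0 d
  suffices coeff_ne : (h * (∑ i ∈ Finset.range r, X ^ i) ^ d).coeff
      ((d * (r - 1) + h.natDegree) / r * r) ≠ 0 by
    rw [veroneseTransform, natDegree_contract_of_coeff_ne_zero hr (by rwa [natDegree_eq]),
      natDegree_eq]
  set k := (d * (r - 1) + h.natDegree) / r * r
  have k_le : k ≤ d * (r - 1) + h.natDegree := Nat.div_mul_le_self _ _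
  rcases eq_or_ne d 0 with rfl | hd0
  · simpa using hd rfl k (by simpa using k_le)
  · have lt_k_add : d * (r - 1) + h.natDegree < k + r := Nat.lt_div_mul_add hr.pos
    have le_mul : r - 1 ≤ d * (r - 1) := Nat.le_mul_of_pos_left _ hd0.pos
    exact (coeff_mul_geom_sum_pow_pos hr hpos h0 (by lia) k_le).ne'

theorem natDegree_of_coe_eq_veroneseSeries_mul [CommRing R] [PartialOrder R]
    [IsStrictOrderedRing R] {d r : ℕ} {F : PowerSeries R} {h g : R[X]} (hr : r ≠ 0)
    (hF : (h : PowerSeries R) = F * (1 - PowerSeries.X) ^ d)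
    (hg : (g : PowerSeries R) = veroneseSeries r F * (1 - PowerSeries.X) ^ d)
    (hpos : h ∈ nonnegCoeffs R) (h0 : h ≠ 0)
    (hd : d = 0 → ∀ i ≤ h.natDegree, h.coeff i ≠ 0) :
    g.natDegree = (d * (r - 1) + h.natDegree) / r := by
  have g_eq : g = veroneseTransform d r h :=
    Polynomial.coe_inj.1 (hg.trans (coe_veroneseTransform hr hF).symm)
  rw [g_eq, natDegree_veroneseTransform hr hpos h0 hd]

end Degree

section HilbertSeries

open Module PowerSeries

/-- The Hilbert series `∑ (dim 𝒜ᵢ) tⁱ` of a family of submodules. By the convention of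
`Module.finrank`, pieces of infinite rank contribute `0`. -/
noncomputable def hilbertSeries {K A : Type*} [Semiring K] [AddCommMonoid A] [Module K A]
    (𝒜 : ℕ → Submodule K A) : ℤ⟦X⟧ :=
  PowerSeries.mk fun i => (finrank K (𝒜 i) : ℤ)

lemma veroneseSeries_hilbertSeries {K A : Type*} [Semiring K] [AddCommMonoid A] [Module K A]
    (𝒜 : ℕ → Submodule K A) (r : ℕ) :
    veroneseSeries r (hilbertSeries 𝒜) = hilbertSeries fun i => 𝒜 (i * r) := by
  ext n
  simp only [hilbertSeries, coeff_veroneseSeries, coeff_mk]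

variable {K A : Type*} [CommRing K] [IsDomain K] [Ring A] [Algebra K A] [IsTorsionFree K A]

lemma finrank_pow_ne_zero_of_le {M : Submodule K A} {i j : ℕ} [Module.Finite K ↥(M ^ i)]
    (hij : i ≤ j) (hj : finrank K ↥(M ^ j) ≠ 0) : finrank K ↥(M ^ i) ≠ 0 := by
  contrapose hj
  have pow_i_eq_zero : M ^ i = 0 := Submodule.finrank_eq_zero.1 hj
  rw [pow_eq_zero_of_le hij pow_i_eq_zero, Submodule.zero_eq_bot, finrank_bot]

lemma coeff_ne_zero_of_coe_eq_hilbertSeries {𝒜 : ℕ → Submodule K A} (hstd : ∀ i, 𝒜 i = 𝒜 1 ^ i)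
    {h : Polynomial ℤ} (h0 : h ≠ 0) (hh : (h : ℤ⟦X⟧) = hilbertSeries 𝒜) {i : ℕ}
    [Module.Finite K (𝒜 i)] (hi : i ≤ h.natDegree) : h.coeff i ≠ 0 := by
  have coeff_eq (j : ℕ) : h.coeff j = finrank K (𝒜 j) := by
    rw [← Polynomial.coeff_coe, hh, hilbertSeries, coeff_mk]
  have natDegree_ne : finrank K (𝒜 h.natDegree) ≠ 0 := by
    rw [← Nat.cast_ne_zero (R := ℤ), ← coeff_eq]
    exact Polynomial.leadingCoeff_ne_zero.2 h0
  have : Module.Finite K ↥(𝒜 1 ^ i) := hstd i ▸ inferInstance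
  rw [hstd] at natDegree_ne
  rw [coeff_eq, Nat.cast_ne_zero, hstd]
  exact finrank_pow_ne_zero_of_le hi natDegree_ne

lemma finrank_zero_ne_zero_of_gradedOne [Nontrivial A] (𝒜 : ℕ → Submodule K A) [SetLike.GradedOne 𝒜]
    [Module.Finite K (𝒜 0)] : finrank K (𝒜 0) ≠ 0 := by
  have one_mem : (1 : A) ∈ 𝒜 0 := SetLike.GradedOne.one_mem
  rw [Ne, Submodule.finrank_eq_zero]
  exact (Submodule.ne_bot_iff _).2 ⟨1, one_mem, one_ne_zero⟩

lemma ne_zero_of_coe_eq_hilbertSeries_mul [Nontrivial A] {𝒜 : ℕ → Submodule K A}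
    [SetLike.GradedOne 𝒜] [Module.Finite K (𝒜 0)] {d : ℕ} {h : Polynomial ℤ}
    (hh : (h : ℤ⟦X⟧) = hilbertSeries 𝒜 * (1 - X) ^ d) : h ≠ 0 := by
  rintro rfl
  have constantCoeff_eq := congrArg constantCoeff hh
  simp only [Polynomial.coe_zero, map_zero, map_mul, map_pow, map_sub, map_one, constantCoeff_X,
    sub_zero, one_pow, mul_one, hilbertSeries, constantCoeff_mk] at constantCoeff_eq
  exact finrank_zero_ne_zero_of_gradedOne 𝒜 (by exact_mod_cast constantCoeff_eq.symm)

end HilbertSeries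

/-- **Equation (2.3), Kubitzke–Murai.**
Let `A` be a standard graded `K`-algebra of Krull dimension `d` whose `h`-polynomial
`h = h_A(t)` (defined by `Hilb(A,t) = h/(1-t)^d`) has nonnegative coefficients, and let
`hr = h_{A^⟨r⟩}(t)` be the `h`-polynomial of the `r`-th Veronese subalgebra
`A^⟨r⟩ = ⊕_i A_{ir}` (whose Hilbert series is `∑_i dim_K A_{ir} tⁱ` and whose Krull
dimension is again `d`).  Then for every `r ≥ 1`,
`deg h_{A^⟨r⟩}(t) = ⌊(d(r-1) + deg h_A(t))/r⌋`. -/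
theorem veronese_h_polynomial_degree
    (K : Type*) [Field K]
    (A : Type*) [CommRing A] [Nontrivial A] [Algebra K A]
    (𝒜 : ℕ → Submodule K A) [GradedAlgebra 𝒜]
    (hstd : ∀ i, 𝒜 i = 𝒜 1 ^ i)
    (hfin : ∀ i, Module.Finite K (𝒜 i))
    (d : ℕ) (hdim : ringKrullDim A = d)
    (h : Polynomial ℤ)
    (hh : (h : PowerSeries ℤ) =
      (PowerSeries.mk fun i => (Module.finrank K (𝒜 i) : ℤ)) * (1 - PowerSeries.X) ^ d)
    (hpos : ∀ i, 0 ≤ h.coeff i)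
    (r : ℕ) (hr : 1 ≤ r)
    (hrpoly : Polynomial ℤ)
    (hhr : (hrpoly : PowerSeries ℤ) =
      (PowerSeries.mk fun i => (Module.finrank K (𝒜 (i * r)) : ℤ)) * (1 - PowerSeries.X) ^ d) :
    hrpoly.natDegree = (d * (r - 1) + h.natDegree) / r := by
  have hr0 : r ≠ 0 := Nat.one_le_iff_ne_zero.1 hr
  have h_ne_zero : h ≠ 0 := ne_zero_of_coe_eq_hilbertSeries_mul hh
  have hhr' : (hrpoly : PowerSeries ℤ) =
      veroneseSeries r (hilbertSeries 𝒜) * (1 - PowerSeries.X) ^ d := by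
    rwa [veroneseSeries_hilbertSeries]
  refine natDegree_of_coe_eq_veroneseSeries_mul hr0 hh hhr' hpos h_ne_zero ?_
  rintro rfl i hi
  exact coeff_ne_zero_of_coe_eq_hilbertSeries hstd h_ne_zero (by simpa [hilbertSeries] using hh) hi
end
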